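/- For every well-formed acyclic net AN, the places, transitions, and flow relation of AN are covered by its scenarios: P_AN = ⋃{P_ON | ON ∈ scenarios(AN)}, T_AN = ⋃{T_ON | ON ∈ scenarios(AN)}, and F_AN = ⋃{F_ON | ON ∈ scenarios(AN)}. -/

import Mathlib

/-- A net: a triple of places, transitions, and a flow relation. -/
structure Net (α : Type*) where
  places : Set α
  transitions : Set α
  flow : α → α → Prop

namespace Net

variable {α : Type*}

/-- The set of direct predecessors (preset) of a node. -/
def pre (N : Net α) (x : α) : Set α := {z | N.flow z x}

/-- The set of direct successors (postset) of a node. -/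
def post (N : Net α) (x : α) : Set α := {z | N.flow x z}

/-- Preset of a set of nodes. -/
def preSet (N : Net α) (X : Set α) : Set α := ⋃ x ∈ X, N.pre x

/-- Postset of a set of nodes. -/
def postSet (N : Net α) (X : Set α) : Set α := ⋃ x ∈ X, N.post x

/-- Initial places: places with empty preset. -/
def initPlaces (N : Net α) : Set α := {p ∈ N.places | N.pre p = ∅}

/-- Final places: places with empty postset. -/
def finPlaces (N : Net α) : Set α := {p ∈ N.places | N.post p = ∅}

/-- An acyclic net: places and transitions are disjoint finite sets, places nonempty,
the flow relation relates only places to transitions and vice versa, is acyclic, and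
every transition has at least one pre-place and one post-place. -/
def IsAcyclicNet (N : Net α) : Prop :=
  N.places.Finite ∧ N.transitions.Finite ∧
  Disjoint N.places N.transitions ∧
  (∀ x y, N.flow x y →
    (x ∈ N.places ∧ y ∈ N.transitions) ∨ (x ∈ N.transitions ∧ y ∈ N.places)) ∧
  N.places.Nonempty ∧
  (∀ x, ¬ Relation.TransGen N.flow x x) ∧
  (∀ t ∈ N.transitions, (N.pre t).Nonempty ∧ (N.post t).Nonempty)

/-- An occurrence net: an acyclic net with `|pre p| ≤ 1` and `|post p| ≤ 1` for each place. -/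
def IsOccurrenceNet (N : Net α) : Prop :=
  IsAcyclicNet N ∧ ∀ p ∈ N.places, (N.pre p).Subsingleton ∧ (N.post p).Subsingleton

/-- A backward deterministic acyclic net: an acyclic net with `|pre p| ≤ 1` for each place. -/
def IsBDAN (N : Net α) : Prop :=
  IsAcyclicNet N ∧ ∀ p ∈ N.places, (N.pre p).Subsingleton

/-- `N` is a subnet of `M`: nonempty set of places included, transitions included,
flow is the restriction of that of `M`, and every transition of `N` retains its
full preset and postset from `M`. -/
def IsSubnet (N M : Net α) : Prop :=
  N.places.Nonempty ∧ N.places ⊆ M.places ∧ N.transitions ⊆ M.transitions ∧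
  (∀ x y, N.flow x y ↔ M.flow x y ∧
    ((x ∈ N.places ∧ y ∈ N.transitions) ∨ (x ∈ N.transitions ∧ y ∈ N.places))) ∧
  (∀ t ∈ N.transitions, N.pre t = M.pre t ∧ N.post t = M.post t)

/-- `N` is a co-initial subnet of `M` : a subnet with the same initial places. -/
def CoInitial (N M : Net α) : Prop := IsSubnet N M ∧ N.initPlaces = M.initPlaces

/-- A step: a nonempty set of transitions with pairwise disjoint presets. -/
def IsStep (N : Net α) (U : Set α) : Prop :=
  U.Nonempty ∧ U ⊆ N.transitions ∧ ∀ t ∈ U, ∀ u ∈ U, t ≠ u → N.pre t ∩ N.pre u = ∅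

/-- A step `U` is enabled at marking `M` if all its pre-places are in `M`. -/
def Enabled (N : Net α) (M U : Set α) : Prop := IsStep N U ∧ N.preSet U ⊆ M

/-- Executing an enabled step `U` at `M` yields `M' = (M ∪ post U) \ pre U`. -/
def StepTrans (N : Net α) (M U M' : Set α) : Prop :=
  Enabled N M U ∧ M' = (M ∪ N.postSet U) \ N.preSet U

/-- Step sequences from a marking to a marking. -/
inductive StepSeqFrom (N : Net α) : Set α → List (Set α) → Set α → Prop
  | nil (M : Set α) : StepSeqFrom N M [] M
  | cons {M U M' σ M''} : StepTrans N M U M' → StepSeqFrom N M' σ M'' →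
      StepSeqFrom N M (U :: σ) M''

/-- The initial marking: the set of initial places. -/
def initMarking (N : Net α) : Set α := N.initPlaces

/-- Step sequences executable from the initial marking. -/
def sseq (N : Net α) : Set (List (Set α)) := {σ | ∃ M, StepSeqFrom N N.initMarking σ M}

/-- Mixed step sequences: alternating steps and resulting markings from a marking. -/
inductive MixFrom (N : Net α) : Set α → List (Set α × Set α) → Prop
  | nil (M : Set α) : MixFrom N M []
  | cons {M U M' l} : StepTrans N M U M' → MixFrom N M' l → MixFrom N M ((U, M') :: l)

/-- Mixed step sequences from the initial marking, represented as the initial marking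
paired with the list of consecutive (step, marking) pairs. -/
def mixsseq (N : Net α) : Set (Set α × List (Set α × Set α)) :=
  {p | p.1 = N.initMarking ∧ MixFrom N p.1 p.2}

/-- Markings reachable from the initial marking. -/
def reach (N : Net α) : Set (Set α) := {M | ∃ σ, StepSeqFrom N N.initMarking σ M}

/-- Firing sequences: step sequences all of whose steps are singletons. -/
def fseq (N : Net α) : Set (List (Set α)) :=
  {σ | σ ∈ N.sseq ∧ ∀ U ∈ σ, ∃ t, U = {t}}

/-- Maximal step sequences: no step can be appended. -/
def maxsseq (N : Net α) : Set (List (Set α)) :=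
  {σ | σ ∈ N.sseq ∧ ¬ ∃ U, σ ++ [U] ∈ N.sseq}

/-- Maximal mixed step sequences: no step and marking can be appended. -/
def maxmixsseq (N : Net α) : Set (Set α × List (Set α × Set α)) :=
  {p | p ∈ N.mixsseq ∧ ¬ ∃ U M, (p.1, p.2 ++ [(U, M)]) ∈ N.mixsseq}

/-- Final reachable markings: markings reached by maximal step sequences. -/
def finreach (N : Net α) : Set (Set α) :=
  {M | ∃ σ ∈ N.maxsseq, StepSeqFrom N N.initMarking σ M}

/-- A step sequence is well-formed if post-sets of distinct transitions in the same
step are disjoint, and post-sets of distinct steps are disjoint. -/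
def WellFormedSeq (N : Net α) (σ : List (Set α)) : Prop :=
  (∀ U ∈ σ, ∀ t ∈ U, ∀ u ∈ U, t ≠ u → N.post t ∩ N.post u = ∅) ∧
  σ.Pairwise (fun U V => N.postSet U ∩ N.postSet V = ∅)

/-- The set of transitions occurring in a step sequence. -/
def transOf (σ : List (Set α)) : Set α := {t | ∃ U ∈ σ, t ∈ U}

/-- A net is well-formed if each transition occurs in at least one step sequence and
all step sequences are well-formed. -/
def WellFormedNet (N : Net α) : Prop :=
  (∀ t ∈ N.transitions, ∃ σ ∈ N.sseq, t ∈ transOf σ) ∧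
  (∀ σ ∈ N.sseq, N.WellFormedSeq σ)

/-- Scenarios of a net: occurrence nets that are co-initial subnets of it. -/
def scenarios (N : Net α) : Set (Net α) :=
  {S | IsOccurrenceNet S ∧ CoInitial S N}

/-- Maximal scenarios: scenarios not strictly included (co-initially) in another scenario. -/
def maxscenarios (N : Net α) : Set (Net α) :=
  {S | S ∈ N.scenarios ∧ ¬ ∃ S', S' ∈ N.scenarios ∧ S' ≠ S ∧ CoInitial S S'}

/-- The scenario induced by a (well-formed) step sequence `σ`:
transitions are those occurring in `σ`, places are the initial places together with
the postsets of those transitions, and the flow is the restriction. -/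
def inducedScenario (N : Net α) (σ : List (Set α)) : Net α where
  places := N.initMarking ∪ N.postSet (transOf σ)
  transitions := transOf σ
  flow := fun x y => N.flow x y ∧
    ((x ∈ N.initMarking ∪ N.postSet (transOf σ) ∧ y ∈ transOf σ) ∨
     (x ∈ transOf σ ∧ y ∈ N.initMarking ∪ N.postSet (transOf σ)))

end Net

namespace Net

structure Inv {α : Type*} (N : Net α) (M T : Set α) : Prop where
  sub : T ⊆ N.transitions
  mark : M ⊆ N.initPlaces ∪ N.postSet T
  preT : N.preSet T ⊆ N.initPlaces ∪ N.postSet T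
  dis : ∀ p ∈ M, p ∉ N.preSet T
  cpre : ∀ t ∈ T, ∀ u ∈ T, ∀ p, N.flow p t → N.flow p u → t = u
  cpost : ∀ t ∈ T, ∀ u ∈ T, ∀ p, N.flow t p → N.flow u p → t = u

theorem mem_preSet {α : Type*} {N : Net α} {T : Set α} {p : α} :
    p ∈ N.preSet T ↔ ∃ t ∈ T, N.flow p t := by simp [preSet, pre]

theorem mem_postSet {α : Type*} {N : Net α} {T : Set α} {p : α} :
    p ∈ N.postSet T ↔ ∃ t ∈ T, N.flow t p := by simp [postSet, post]

theorem mem_init {α : Type*} {N : Net α} {p : α} :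
    p ∈ N.initPlaces ↔ p ∈ N.places ∧ ∀ t, ¬ N.flow t p := by
  simp [initPlaces, pre, Set.eq_empty_iff_forall_notMem]

theorem Inv.step {α : Type*} {N : Net α} {M T U M' : Set α} (hi : N.Inv M T)
    (hs : N.StepTrans M U M')
    (h1 : ∀ t ∈ U, ∀ u ∈ U, t ≠ u → N.post t ∩ N.post u = ∅)
    (h2 : N.postSet T ∩ N.postSet U = ∅) : N.Inv M' (T ∪ U) := by
  obtain ⟨⟨⟨hne, hsub, hpre⟩, hen⟩, rfl⟩ := hs
  have hmono : ∀ p, p ∈ N.postSet (T ∪ U) ↔ p ∈ N.postSet T ∨ p ∈ N.postSet U := by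
    intro p; simp only [mem_postSet, Set.mem_union]; grind
  have hmono' : ∀ p, p ∈ N.preSet (T ∪ U) ↔ p ∈ N.preSet T ∨ p ∈ N.preSet U := by
    intro p; simp only [mem_preSet, Set.mem_union]; grind
  have hpre' : ∀ t ∈ U, ∀ u ∈ U, ∀ p, N.flow p t → N.flow p u → t = u := by
    intro t ht u hu p h h'
    by_contra hn
    have : p ∈ N.pre t ∩ N.pre u := ⟨h, h'⟩
    rw [hpre t ht u hu hn] at this
    exact this
  have hpost' : ∀ t ∈ U, ∀ u ∈ U, ∀ p, N.flow t p → N.flow u p → t = u := by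
    intro t ht u hu p h h'
    by_contra hn
    have : p ∈ N.post t ∩ N.post u := ⟨h, h'⟩
    rw [h1 t ht u hu hn] at this
    exact this
  have h2' : ∀ p, p ∈ N.postSet T → p ∈ N.postSet U → False := by
    intro p h h'
    have : p ∈ N.postSet T ∩ N.postSet U := ⟨h, h'⟩
    rw [h2] at this
    exact this
  refine ⟨Set.union_subset hi.sub hsub, ?_, ?_, ?_, ?_, ?_⟩
  · rintro p ⟨hp | hp, -⟩
    · rcases hi.mark hp with h | h
      · exact Or.inl h
      · exact Or.inr ((hmono p).2 (Or.inl h))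
    · exact Or.inr ((hmono p).2 (Or.inr hp))
  · intro p hp
    have : p ∈ N.initPlaces ∪ N.postSet T := by
      rcases (hmono' p).1 hp with h | h
      · exact hi.preT h
      · exact hi.mark (hen h)
    rcases this with h | h
    · exact Or.inl h
    · exact Or.inr ((hmono p).2 (Or.inl h))
  · rintro p ⟨hp, hnp⟩ hc
    rcases (hmono' p).1 hc with h | h
    · rcases hp with hp | hp
      · exact hi.dis p hp h
      · rcases hi.preT h with h | h
        · obtain ⟨t, -, ht⟩ := mem_postSet.1 hp
          exact (mem_init.1 h).2 t ht
        · exact h2' p h hp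
    · exact hnp h
  · rintro t (ht | ht) u (hu | hu) p h h'
    · exact hi.cpre t ht u hu p h h'
    · exact (hi.dis p (hen (mem_preSet.2 ⟨u, hu, h'⟩)) (mem_preSet.2 ⟨t, ht, h⟩)).elim
    · exact (hi.dis p (hen (mem_preSet.2 ⟨t, ht, h⟩)) (mem_preSet.2 ⟨u, hu, h'⟩)).elim
    · exact hpre' t ht u hu p h h'
  · rintro t (ht | ht) u (hu | hu) p h h'
    · exact hi.cpost t ht u hu p h h'
    · exact (h2' p (mem_postSet.2 ⟨t, ht, h⟩) (mem_postSet.2 ⟨u, hu, h'⟩)).elim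
    · exact (h2' p (mem_postSet.2 ⟨u, hu, h'⟩) (mem_postSet.2 ⟨t, ht, h⟩)).elim
    · exact hpost' t ht u hu p h h'

theorem Inv.seq {α : Type*} {N : Net α} {M M'' : Set α} {σ : List (Set α)}
    (hs : N.StepSeqFrom M σ M'') : ∀ T : Set α, N.Inv M T → N.WellFormedSeq σ →
    (∀ U ∈ σ, N.postSet T ∩ N.postSet U = ∅) → N.Inv M'' (T ∪ transOf σ) := by
  induction hs with
  | nil M => intro T hi _ _; simpa [transOf] using hi
  | @cons M U M' σ M'' hst _ ih =>
    intro T hi hw hT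
    obtain ⟨hw1, hw2⟩ := hw
    rw [List.pairwise_cons] at hw2
    have := ih (T ∪ U) (hi.step hst (hw1 U (by simp)) (hT U (by simp)))
      ⟨fun V hV => hw1 V (by simp [hV]), hw2.2⟩ (by
        intro V hV
        have e : N.postSet (T ∪ U) = N.postSet T ∪ N.postSet U := by
          exact Set.biUnion_union T U _
        rw [e, Set.union_inter_distrib_right, hT V (by simp [hV]), hw2.1 V hV, Set.union_empty])
    have e : T ∪ transOf (U :: σ) = (T ∪ U) ∪ transOf σ := by
      ext x; simp [transOf, or_assoc]
    rw [e]; exact this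

theorem init_nonempty {α : Type*} {N : Net α} (h : N.IsAcyclicNet) (hwf : N.WellFormedNet) :
    N.initPlaces.Nonempty := by
  obtain ⟨hfp, hft, hd, hfl, ⟨p, hp⟩, hac, hpp⟩ := h
  by_cases hi : p ∈ N.initPlaces
  · exact ⟨p, hi⟩
  have : ∃ t, N.flow t p := by
    by_contra hc
    exact hi (mem_init.2 ⟨hp, not_exists.1 hc⟩)
  obtain ⟨t, ht⟩ := this
  have htT : t ∈ N.transitions := by
    rcases hfl t p ht with h | h
    · exact (Set.disjoint_left.1 hd hp h.2).elim
    · exact h.1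
  obtain ⟨σ, ⟨M, hσ⟩, V, hV, -⟩ := hwf.1 t htT
  cases hσ with
  | nil => simp at hV
  | cons hst _ =>
    obtain ⟨⟨⟨⟨u, hu⟩, hsub, -⟩, hen⟩, -⟩ := hst
    obtain ⟨q, hq⟩ := (hpp u (hsub hu)).1
    exact ⟨q, hen (mem_preSet.2 ⟨u, hu, hq⟩)⟩

theorem induced_props {α : Type*} {N : Net α} (h : N.IsAcyclicNet) (hwf : N.WellFormedNet)
    {σ : List (Set α)} (hσ : σ ∈ N.sseq) : N.inducedScenario σ ∈ N.scenarios ∧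
      ∀ t ∈ transOf σ, (∀ p, N.flow p t → (N.inducedScenario σ).flow p t) ∧
        (∀ p, N.flow t p → (N.inducedScenario σ).flow t p) := by
  have hne := init_nonempty h hwf
  have hw := hwf.2 σ hσ
  obtain ⟨M, hs⟩ := hσ
  have hi : N.Inv M (transOf σ) := by
    have h0 : N.Inv N.initMarking ∅ :=
      ⟨by simp, fun p hp => Or.inl hp, by simp [preSet], by simp [preSet], by simp, by simp⟩
    have := Inv.seq hs ∅ h0 hw (by simp [postSet])
    simpa using this
  obtain ⟨hfp, hft, hd, hfl, hpne, hac, hpp⟩ := h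
  have hpl : N.initMarking ∪ N.postSet (transOf σ) ⊆ N.places := by
    rintro p (hp | hp)
    · exact hp.1
    · obtain ⟨t, ht, hf⟩ := mem_postSet.1 hp
      rcases hfl t p hf with h | h
      · exact (Set.disjoint_left.1 hd h.1 (hi.sub ht)).elim
      · exact h.2
  have hcov : ∀ t ∈ transOf σ, (∀ p, N.flow p t → (N.inducedScenario σ).flow p t) ∧
        (∀ p, N.flow t p → (N.inducedScenario σ).flow t p) := by
    intro t ht
    refine ⟨fun p hf => ⟨hf, Or.inl ⟨hi.preT (mem_preSet.2 ⟨t, ht, hf⟩), ht⟩⟩,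
      fun p hf => ⟨hf, Or.inr ⟨ht, Or.inr (mem_postSet.2 ⟨t, ht, hf⟩)⟩⟩⟩
  refine ⟨⟨⟨⟨hfp.subset hpl, hft.subset hi.sub, hd.mono hpl hi.sub, fun x y hf => hf.2,
    hne.mono Set.subset_union_left, ?_, ?_⟩, ?_⟩,
    ⟨hne.mono Set.subset_union_left, hpl, hi.sub, fun x y => Iff.rfl, ?_⟩, ?_⟩, hcov⟩
  · intro x hx
    have hle : (N.inducedScenario σ).flow ≤ N.flow := fun a b hab => hab.1
    exact hac x (Relation.TransGen.mono hle x x hx)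
  · intro t ht
    obtain ⟨⟨p, hp⟩, ⟨q, hq⟩⟩ := hpp t (hi.sub ht)
    exact ⟨⟨p, (hcov t ht).1 p hp⟩, ⟨q, (hcov t ht).2 q hq⟩⟩
  · intro p hp
    have hpn : p ∉ transOf σ := fun hc => Set.disjoint_left.1 hd (hpl hp) (hi.sub hc)
    refine ⟨?_, ?_⟩
    · rintro t ⟨hf, h | h⟩ u ⟨hf', h' | h'⟩
      · exact (hpn h.2).elim
      · exact (hpn h.2).elim
      · exact (hpn h'.2).elim
      · exact hi.cpost t h.1 u h'.1 p hf hf'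
    · rintro t ⟨hf, h | h⟩ u ⟨hf', h' | h'⟩
      · exact hi.cpre t h.2 u h'.2 p hf hf'
      · exact (hpn h'.1).elim
      · exact (hpn h.1).elim
      · exact (hpn h.1).elim
  · intro t ht
    exact ⟨Set.ext fun p => ⟨fun hf => hf.1, (hcov t ht).1 p⟩,
      Set.ext fun p => ⟨fun hf => hf.1, (hcov t ht).2 p⟩⟩
  · ext p
    rw [mem_init, mem_init]
    constructor
    · rintro ⟨hp, hn⟩
      rcases hp with hp | hp
      · exact mem_init.1 hp
      · obtain ⟨t, ht, hf⟩ := mem_postSet.1 hp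
        exact (hn t ((hcov t ht).2 p hf)).elim
    · rintro ⟨hp, hn⟩
      exact ⟨Or.inl (mem_init.2 ⟨hp, hn⟩), fun t hf => hn t hf.1⟩

end Net

/-- For every well-formed acyclic net, its places, transitions and flow
relation are covered by its scenarios. -/
theorem stmt18 {α : Type*} (N : Net α) (h : N.IsAcyclicNet) (hwf : N.WellFormedNet) :
    N.places = (⋃ S ∈ N.scenarios, S.places) ∧
    N.transitions = (⋃ S ∈ N.scenarios, S.transitions) ∧
    (∀ x y, N.flow x y ↔ ∃ S ∈ N.scenarios, S.flow x y) := by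
  have hT : ∀ t ∈ N.transitions, ∃ S ∈ N.scenarios, t ∈ S.transitions ∧
      (∀ p, N.flow p t → S.flow p t) ∧ (∀ p, N.flow t p → S.flow t p) := by
    intro t ht
    obtain ⟨σ, hσ, htσ⟩ := hwf.1 t ht
    have := Net.induced_props h hwf hσ
    exact ⟨_, this.1, htσ, this.2 t htσ⟩
  have hF : ∀ x y, N.flow x y → ∃ S ∈ N.scenarios, S.flow x y := by
    intro x y hf
    rcases h.2.2.2.1 x y hf with h' | h'
    · obtain ⟨S, hS, -, h1, -⟩ := hT y h'.2
      exact ⟨S, hS, h1 x hf⟩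
    · obtain ⟨S, hS, -, -, h1⟩ := hT x h'.1
      exact ⟨S, hS, h1 y hf⟩
  refine ⟨Set.Subset.antisymm ?_ ?_, Set.Subset.antisymm ?_ ?_, fun x y => ⟨hF x y, ?_⟩⟩
  · intro p hp
    simp only [Set.mem_iUnion]
    by_cases hi : p ∈ N.initPlaces
    · exact ⟨_, (Net.induced_props h hwf (σ := []) ⟨_, Net.StepSeqFrom.nil _⟩).1, Or.inl hi⟩
    · have : ∃ t, N.flow t p := by
        by_contra hc
        exact hi (Net.mem_init.2 ⟨hp, not_exists.1 hc⟩)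
      obtain ⟨t, ht⟩ := this
      obtain ⟨S, hS, hf⟩ := hF t p ht
      refine ⟨S, hS, ?_⟩
      rcases hS.1.1.2.2.2.1 t p hf with h' | h'
      · exact (Set.disjoint_left.1 h.2.2.1 hp (hS.2.1.2.2.1 h'.2)).elim
      · exact h'.2
  · exact Set.iUnion₂_subset fun S hS => hS.2.1.2.1
  · intro t ht
    obtain ⟨S, hS, h1, -⟩ := hT t ht
    simp only [Set.mem_iUnion]
    exact ⟨S, hS, h1⟩
  · exact Set.iUnion₂_subset fun S hS => hS.2.1.2.2.1
  · rintro ⟨S, hS, hf⟩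
    exact ((hS.2.1.2.2.2.1 x y).1 hf).1
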